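/- Let X be a uniquely arcwise connected metric space containing no tripod (no three arcs from a common point meeting pairwise only at that point). Then X embeds isometrically onto an interval of ℝ. -/

import Mathlib

open Set

/-- `A` is an arc in `X` connecting `x` with `y`: a subset homeomorphic to
`[0,1]` with endpoints `x` and `y`. -/
def IsArcBetween {X : Type*} [TopologicalSpace X] (A : Set X) (x y : X) : Prop :=
  ∃ h : (Icc (0:ℝ) 1) ≃ₜ A,
    (h ⟨0, by norm_num⟩ : X) = x ∧ (h ⟨1, by norm_num⟩ : X) = y

theorem arc_mk {X : Type*} [MetricSpace X] (f : ℝ → X) (a b : ℝ) (hab : a < b)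
    (hc : ContinuousOn f (Icc a b)) (hi : InjOn f (Icc a b)) :
    IsArcBetween (f '' Icc a b) (f a) (f b) := by
  let e : Icc a b ≃ₜ Icc (0:ℝ) 1 := iccHomeoI a b hab
  let g : Icc (0:ℝ) 1 → f '' Icc a b := fun t => ⟨f (e.symm t), mem_image_of_mem f (e.symm t).2⟩
  have hg : Continuous g := by
    refine Continuous.subtype_mk ?_ _
    exact (continuousOn_iff_continuous_domRestrict.1 hc).comp e.symm.continuous
  have hb : Function.Bijective g := by
    constructor
    · intro s t hst
      have h1 : f (e.symm s) = f (e.symm t) := congrArg Subtype.val hst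
      exact e.symm.injective (Subtype.ext (hi (e.symm s).2 (e.symm t).2 h1))
    · rintro ⟨y, u, hu, rfl⟩
      exact ⟨e ⟨u, hu⟩, by simp [g]⟩
  refine ⟨Continuous.homeoOfEquivCompactToT2 (f := Equiv.ofBijective g hb) hg, ?_, ?_⟩
  · change f (e.symm ⟨0, _⟩) = f a
    simp [e, iccHomeoI_symm_apply_coe]
  · change f (e.symm ⟨1, _⟩) = f b
    simp [e, iccHomeoI_symm_apply_coe]

theorem arc_elim {X : Type*} [MetricSpace X] {A : Set X} {x y : X} (h : IsArcBetween A x y) :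
    ∃ f : ℝ → X, ContinuousOn f (Icc 0 1) ∧ InjOn f (Icc 0 1) ∧ f '' Icc 0 1 = A ∧
      f 0 = x ∧ f 1 = y := by
  obtain ⟨h, h0, h1⟩ := h
  let f : ℝ → X := IccExtend (zero_le_one' ℝ) (fun t => (h t : X))
  have hf : ∀ t (ht : t ∈ Icc (0:ℝ) 1), f t = h ⟨t, ht⟩ := fun t ht => IccExtend_of_mem _ _ ht
  refine ⟨f, ?_, ?_, ?_, ?_, ?_⟩
  · exact (Continuous.Icc_extend' (continuous_subtype_val.comp h.continuous)).continuousOn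
  · intro s hs t ht hst
    rw [hf s hs, hf t ht] at hst
    exact congrArg Subtype.val (h.injective (Subtype.ext hst))
  · ext p
    constructor
    · rintro ⟨t, ht, rfl⟩
      rw [hf t ht]
      exact (h _).2
    · intro hp
      refine ⟨h.symm ⟨p, hp⟩, (h.symm ⟨p, hp⟩).2, ?_⟩
      rw [hf _ (h.symm ⟨p, hp⟩).2]
      simp
  · rw [hf 0 (by simp)]; exact h0
  · rw [hf 1 (by simp)]; exact h1

theorem arc_concat {X : Type*} [MetricSpace X] {A B : Set X} {x y z : X}
    (hA : IsArcBetween A x z) (hB : IsArcBetween B z y) (hAB : ∀ p ∈ A, p ∈ B → p = z) :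
    IsArcBetween (A ∪ B) x y := by
  obtain ⟨f, fc, fi, fA, f0, f1⟩ := arc_elim hA
  obtain ⟨g, gc, gi, gB, g0, g1⟩ := arc_elim hB
  let k : ℝ → X := fun t => if t ≤ 1 then f t else g (t - 1)
  have k1 : ∀ t ∈ Icc (0:ℝ) 1, k t = f t := fun t ht => if_pos ht.2
  have k2 : ∀ t ∈ Icc (1:ℝ) 2, k t = g (t - 1) := by
    intro t ht
    by_cases h : t ≤ 1
    · have : t = 1 := le_antisymm h ht.1
      subst this
      simp [k, f1, g0]
    · exact if_neg h
  have hU : Icc (0:ℝ) 2 = Icc 0 1 ∪ Icc 1 2 :=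
    (Icc_union_Icc_eq_Icc (by norm_num) (by norm_num)).symm
  have sh : ∀ t ∈ Icc (1:ℝ) 2, t - 1 ∈ Icc (0:ℝ) 1 := by
    intro t ht
    exact ⟨by linarith [ht.1], by linarith [ht.2]⟩
  have kc : ContinuousOn k (Icc 0 2) := by
    rw [hU]
    refine ContinuousOn.union_of_isClosed ?_ ?_ isClosed_Icc isClosed_Icc
    · exact fc.congr k1
    · refine ContinuousOn.congr ?_ k2
      exact gc.comp (by fun_prop) sh
  have cross : ∀ s ∈ Icc (0:ℝ) 1, ∀ t ∈ Icc (1:ℝ) 2, k s = k t → s = t := by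
    intro s hs t ht h
    rw [k1 s hs, k2 t ht] at h
    have hz : f s = z := hAB _ (fA ▸ mem_image_of_mem f hs)
      (by rw [h, ← gB]; exact mem_image_of_mem g (sh t ht))
    have e1 : s = 1 := fi hs (by simp) (hz.trans f1.symm)
    have e2 : t - 1 = 0 := gi (sh t ht) (by simp) ((h.symm.trans hz).trans g0.symm)
    linarith
  have ki : InjOn k (Icc 0 2) := by
    intro s hs t ht h
    rw [hU] at hs ht
    rcases hs with hs | hs <;> rcases ht with ht | ht
    · rw [k1 s hs, k1 t ht] at h
      exact fi hs ht h
    · exact cross s hs t ht h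
    · exact (cross t ht s hs h.symm).symm
    · rw [k2 s hs, k2 t ht] at h
      have := gi (sh s hs) (sh t ht) h
      linarith
  have := arc_mk k 0 2 (by norm_num) kc ki
  have im : k '' Icc 0 2 = A ∪ B := by
    rw [hU, image_union]
    congr 1
    · rw [image_congr k1, fA]
    · rw [image_congr k2, ← gB]
      ext p
      constructor
      · rintro ⟨t, ht, rfl⟩
        exact ⟨t - 1, sh t ht, rfl⟩
      · rintro ⟨t, ht, rfl⟩
        exact ⟨t + 1, ⟨by linarith [ht.1], by linarith [ht.2]⟩, by simp⟩
  rw [im, k1 0 (by simp), k2 2 (by norm_num), f0] at this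
  norm_num at this
  rwa [g1] at this

/-- `z` lies metrically between `x` and `y`. -/
def Btw3 {X : Type*} [MetricSpace X] (x z y : X) : Prop := dist x z + dist z y = dist x y

theorem Btw3.symm {X : Type*} [MetricSpace X] {x z y : X} (h : Btw3 x z y) : Btw3 y z x := by
  unfold Btw3 at *
  rw [dist_comm y z, dist_comm z x, dist_comm y x]
  linarith

theorem seg_cap {X : Type*} [MetricSpace X] {x z y p : X} (h : Btw3 x z y) (h1 : Btw3 x p z) (h2 : Btw3 z p y) : p = z := by
  unfold Btw3 at *
  have := dist_triangle x p y
  have := dist_comm p z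
  have := dist_nonneg (x := p) (y := z)
  exact dist_le_zero.1 (by linarith)

theorem seg_arc {X : Type*} [MetricSpace X]
    (huniq : ∀ x y : X, x ≠ y → ∃! A : Set X, IsArcBetween A x y)
    (hgeo : ∀ (x y : X) (A : Set X), IsArcBetween A x y →
      ∀ z ∈ A, dist x z + dist z y = dist x y)
    {x y : X} (hxy : x ≠ y) : IsArcBetween {z | Btw3 x z y} x y := by
  obtain ⟨A, hA, hu⟩ := huniq x y hxy
  have : {z | Btw3 x z y} = A := by
    refine Subset.antisymm ?_ (fun z hz => hgeo x y A hA z hz)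
    intro z hz
    obtain ⟨f, -, -, fA, f0, f1⟩ := arc_elim hA
    by_cases hx : x = z
    · rw [← hx, ← f0, ← fA]; exact mem_image_of_mem f (by simp)
    by_cases hy : z = y
    · rw [hy, ← f1, ← fA]; exact mem_image_of_mem f (by simp)
    obtain ⟨A1, h1, -⟩ := huniq x z hx
    obtain ⟨A2, h2, -⟩ := huniq z y hy
    have h3 := arc_concat h1 h2 (fun p hp hq =>
      seg_cap hz (hgeo _ _ _ h1 p hp) (hgeo _ _ _ h2 p hq))
    rw [← hu _ h3]
    left
    obtain ⟨g, -, -, gA, g0, g1⟩ := arc_elim h1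
    rw [← g1, ← gA]; exact mem_image_of_mem g (by simp)
  rwa [this]

theorem seg_cmp {X : Type*} [MetricSpace X]
    (huniq : ∀ x y : X, x ≠ y → ∃! A : Set X, IsArcBetween A x y)
    (hgeo : ∀ (x y : X) (A : Set X), IsArcBetween A x y →
      ∀ z ∈ A, dist x z + dist z y = dist x y)
    {x y p q : X} (hp : Btw3 x p y) (hq : Btw3 x q y) : Btw3 x p q ∨ Btw3 x q p := by
  by_cases hxy : x = y
  · subst hxy
    unfold Btw3 at hp
    have e : p = x := dist_le_zero.1 (by
      have := dist_comm x p
      have := dist_nonneg (x := p) (y := x)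
      simp at hp
      linarith)
    left; unfold Btw3; simp [e]
  obtain ⟨f, fc, fi, fA, f0, f1⟩ := arc_elim (seg_arc huniq hgeo hxy)
  have key : ∀ s t : ℝ, 0 ≤ s → s ≤ t → t ≤ 1 → Btw3 x (f s) (f t) := by
    intro s t hs hst ht
    rcases (hs.trans hst).eq_or_lt with h | h
    · have : s = 0 := by linarith
      subst this
      unfold Btw3
      simp [f0]
    · have sub : Icc 0 t ⊆ Icc (0:ℝ) 1 := Icc_subset_Icc le_rfl ht
      have := hgeo _ _ _ (arc_mk f 0 t h (fc.mono sub) (fi.mono sub)) (f s)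
        (mem_image_of_mem f ⟨hs, hst⟩)
      rwa [f0] at this
  have hp' : p ∈ f '' Icc 0 1 := fA ▸ hp
  have hq' : q ∈ f '' Icc 0 1 := fA ▸ hq
  obtain ⟨s, hs, rfl⟩ := hp'
  obtain ⟨t, ht, rfl⟩ := hq'
  rcases le_total s t with h | h
  · exact Or.inl (key s t hs.1 h ht.2)
  · exact Or.inr (key t s ht.1 h hs.2)

theorem not_btw {X : Type*} [MetricSpace X]
    (huniq : ∀ x y : X, x ≠ y → ∃! A : Set X, IsArcBetween A x y)
    (hgeo : ∀ (x y : X) (A : Set X), IsArcBetween A x y →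
      ∀ z ∈ A, dist x z + dist z y = dist x y)
    {x a y : X} (h : ¬ Btw3 x a y) : ∃ p, p ≠ a ∧ Btw3 a p x ∧ Btw3 a p y := by
  by_contra! hc
  have hx : x ≠ a := by rintro rfl; exact h (by simp [Btw3])
  have hy : a ≠ y := by rintro rfl; exact h (by simp [Btw3])
  have h3 := arc_concat (seg_arc huniq hgeo hx) (seg_arc huniq hgeo hy) (by
    intro p hp hq
    by_contra hne
    exact hc p hne (Btw3.symm hp) hq)
  exact h (hgeo _ _ _ h3 a (Or.inl (by simp [Btw3])))

theorem btw_trans {X : Type*} [MetricSpace X] {a p q b : X} (h1 : Btw3 a p q) (h2 : Btw3 a q b) : Btw3 a p b := by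
  unfold Btw3 at *
  have := dist_triangle p q b
  have := dist_triangle a p b
  linarith

theorem btw_trans_right {X : Type*} [MetricSpace X] {a p q b : X} (h1 : Btw3 a p q) (h2 : Btw3 a q b) : Btw3 p q b := by
  have h3 := btw_trans h1 h2
  unfold Btw3 at *
  linarith

theorem not_btw_trans {X : Type*} [MetricSpace X]
    (huniq : ∀ x y : X, x ≠ y → ∃! A : Set X, IsArcBetween A x y)
    (hgeo : ∀ (x y : X) (A : Set X), IsArcBetween A x y →
      ∀ z ∈ A, dist x z + dist z y = dist x y)
    {x a b y : X} (h1 : ¬ Btw3 x a b) (h2 : ¬ Btw3 b a y) : ¬ Btw3 x a y := by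
  intro h
  obtain ⟨p, pa, px, pb⟩ := not_btw huniq hgeo h1
  obtain ⟨q, qa, qb, qy⟩ := not_btw huniq hgeo h2
  rcases seg_cmp huniq hgeo pb qb with c | c
  · exact pa (seg_cap h px.symm (btw_trans c qy))
  · exact qa (seg_cap h (btw_trans c px).symm qy)

theorem no_tri {X : Type*} [MetricSpace X]
    (huniq : ∀ x y : X, x ≠ y → ∃! A : Set X, IsArcBetween A x y)
    (hgeo : ∀ (x y : X) (A : Set X), IsArcBetween A x y →
      ∀ z ∈ A, dist x z + dist z y = dist x y)
    (hnotripod : ¬ ∃ (x x₁ x₂ x₃ : X) (A₁ A₂ A₃ : Set X),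
      x ≠ x₁ ∧ x ≠ x₂ ∧ x ≠ x₃ ∧ x₁ ≠ x₂ ∧ x₁ ≠ x₃ ∧ x₂ ≠ x₃ ∧
      IsArcBetween A₁ x x₁ ∧ IsArcBetween A₂ x x₂ ∧ IsArcBetween A₃ x x₃ ∧
      A₁ ∩ A₂ = {x} ∧ A₁ ∩ A₃ = {x} ∧ A₂ ∩ A₃ = {x})
    {m a b c : X} (ha : m ≠ a) (hb : m ≠ b) (hc : m ≠ c)
    (hab : ∀ p, Btw3 m p a → Btw3 m p b → p = m)
    (hac : ∀ p, Btw3 m p a → Btw3 m p c → p = m)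
    (hbc : ∀ p, Btw3 m p b → Btw3 m p c → p = m) : False := by
  have e : ∀ u v : X, (∀ p, Btw3 m p u → Btw3 m p v → p = m) →
      {z | Btw3 m z u} ∩ {z | Btw3 m z v} = {m} := by
    intro u v h
    ext p
    constructor
    · rintro ⟨h1, h2⟩; exact h p h1 h2
    · rintro rfl; simp [Btw3]
  have d : ∀ u v : X, m ≠ u → (∀ p, Btw3 m p u → Btw3 m p v → p = m) → u ≠ v := by
    rintro u v hu h rfl
    exact hu (h u (by simp [Btw3]) (by simp [Btw3])).symm
  exact hnotripod ⟨m, a, b, c, _, _, _, ha, hb, hc, d _ _ ha hab, d _ _ ha hac, d _ _ hb hbc,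
    seg_arc huniq hgeo ha, seg_arc huniq hgeo hb, seg_arc huniq hgeo hc,
    e _ _ hab, e _ _ hac, e _ _ hbc⟩

theorem collinear3 {X : Type*} [MetricSpace X]
    (huniq : ∀ x y : X, x ≠ y → ∃! A : Set X, IsArcBetween A x y)
    (hgeo : ∀ (x y : X) (A : Set X), IsArcBetween A x y →
      ∀ z ∈ A, dist x z + dist z y = dist x y)
    (hnotripod : ¬ ∃ (x x₁ x₂ x₃ : X) (A₁ A₂ A₃ : Set X),
      x ≠ x₁ ∧ x ≠ x₂ ∧ x ≠ x₃ ∧ x₁ ≠ x₂ ∧ x₁ ≠ x₃ ∧ x₂ ≠ x₃ ∧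
      IsArcBetween A₁ x x₁ ∧ IsArcBetween A₂ x x₂ ∧ IsArcBetween A₃ x x₃ ∧
      A₁ ∩ A₂ = {x} ∧ A₁ ∩ A₃ = {x} ∧ A₂ ∩ A₃ = {x})
    (b a c : X) : Btw3 b a c ∨ Btw3 a b c ∨ Btw3 a c b := by
  by_contra! hcon
  obtain ⟨h1, h2, h3⟩ := hcon
  have hab : a ≠ b := by rintro rfl; exact h1 (by simp [Btw3])
  have hS : IsCompact {z | Btw3 a z b} := by
    obtain ⟨f, fc, -, fA, -, -⟩ := arc_elim (seg_arc huniq hgeo hab)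
    rw [← fA]
    exact isCompact_Icc.image_of_continuousOn fc
  have hcl : IsClosed {z | Btw3 a z c} := by
    unfold Btw3
    exact isClosed_eq (by fun_prop) (by fun_prop)
  obtain ⟨m, ⟨hmb, hmc⟩, hmax⟩ := (hS.inter_right hcl).exists_isMaxOn
    ⟨a, by simp [Btw3], by simp [Btw3]⟩ (f := fun z => dist a z) (by fun_prop)
  change Btw3 a m b at hmb
  change Btw3 a m c at hmc
  have hmax' : ∀ p, Btw3 a p b → Btw3 a p c → dist a p ≤ dist a m := fun p u v => hmax ⟨u, v⟩
  have ma : m ≠ a := by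
    rintro rfl
    obtain ⟨p, pa, pb, pc⟩ := not_btw huniq hgeo h1
    have := hmax' p pb pc
    rw [dist_self] at this
    exact pa (dist_le_zero.1 this).symm
  have mb : m ≠ b := by rintro rfl; exact h2 hmc
  have mc : m ≠ c := by rintro rfl; exact h3 hmb
  refine no_tri huniq hgeo hnotripod ma mb mc ?_ ?_ ?_
  · intro p u v; exact seg_cap hmb u.symm v
  · intro p u v; exact seg_cap hmc u.symm v
  · intro p u v
    have ub := (btw_trans u.symm hmb.symm).symm
    have uc := (btw_trans v.symm hmc.symm).symm
    have := hmax' p ub uc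
    unfold Btw3 at *
    have := dist_comm p m
    have := dist_nonneg (x := p) (y := m)
    exact dist_le_zero.1 (by linarith)

/-- Let `X` be a uniquely arcwise connected metric space in which every arc is
a geodesic segment (a metric tree), containing no tripod. Then `X` embeds
isometrically onto an interval of `ℝ`. -/
theorem stmt19 {X : Type*} [MetricSpace X] [Nonempty X]
    (huniq : ∀ x y : X, x ≠ y → ∃! A : Set X, IsArcBetween A x y)
    (hgeo : ∀ (x y : X) (A : Set X), IsArcBetween A x y →
      ∀ z ∈ A, dist x z + dist z y = dist x y)
    (hnotripod : ¬ ∃ (x x₁ x₂ x₃ : X) (A₁ A₂ A₃ : Set X),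
      x ≠ x₁ ∧ x ≠ x₂ ∧ x ≠ x₃ ∧ x₁ ≠ x₂ ∧ x₁ ≠ x₃ ∧ x₂ ≠ x₃ ∧
      IsArcBetween A₁ x x₁ ∧ IsArcBetween A₂ x x₂ ∧ IsArcBetween A₃ x x₃ ∧
      A₁ ∩ A₂ = {x} ∧ A₁ ∩ A₃ = {x} ∧ A₂ ∩ A₃ = {x}) :
    ∃ f : X → ℝ, Isometry f ∧ (Set.range f).OrdConnected := by
  classical
  have hpre : PreconnectedSpace X := by
    refine ⟨isPreconnected_of_forall_pair ?_⟩
    intro x _ y _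
    by_cases hxy : x = y
    · subst hxy
      exact ⟨{x}, subset_univ _, rfl, rfl, isPreconnected_singleton⟩
    · obtain ⟨f, fc, -, -, f0, f1⟩ := arc_elim (seg_arc huniq hgeo hxy)
      exact ⟨f '' Icc 0 1, subset_univ _, ⟨0, by simp, f0⟩, ⟨1, by simp, f1⟩,
        isPreconnected_Icc.image f fc⟩
  suffices h : ∃ f : X → ℝ, Isometry f by
    obtain ⟨f, hf⟩ := h
    exact ⟨f, hf, (isPreconnected_range hf.continuous).ordConnected⟩
  rcases subsingleton_or_nontrivial X with hs | hn
  · exact ⟨fun _ => 0, isometry_subsingleton⟩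
  obtain ⟨a, b, hab⟩ := exists_pair_ne X
  -- two points on the same side of `a`
  have same : ∀ x y : X, (¬ Btw3 x a y ∨ x = a ∨ y = a) →
      dist x y = |dist a x - dist a y| := by
    intro x y h
    rcases h with h | rfl | rfl
    · rcases collinear3 huniq hgeo hnotripod x a y with c | c | c
      · exact absurd c h
      · unfold Btw3 at c
        rw [← c, abs_sub_comm, add_sub_cancel_left, abs_of_nonneg dist_nonneg]
      · unfold Btw3 at c
        rw [← c, add_sub_cancel_left, abs_of_nonneg dist_nonneg, dist_comm]
    · simp
    · simp [dist_comm]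
  have opp : ∀ x y : X, Btw3 x a y → dist x y = dist a x + dist a y := by
    intro x y h
    unfold Btw3 at h
    rw [← h, dist_comm x a]
  have mixed : ∀ x y : X, Btw3 x a b → ¬ Btw3 y a b → Btw3 x a y := by
    intro x y hx hy
    by_contra hc
    exact not_btw_trans huniq hgeo hc hy hx
  have neg : ∀ x y : X, Btw3 x a b → Btw3 y a b → ¬ Btw3 x a y ∨ x = a ∨ y = a := by
    intro x y hx hy
    by_contra! hc
    obtain ⟨h, xa, ya⟩ := hc
    exact no_tri huniq hgeo hnotripod xa.symm ya.symm hab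
      (fun p u v => seg_cap h u.symm v) (fun p u v => seg_cap hx u.symm v)
      (fun p u v => seg_cap hy u.symm v)
  refine ⟨fun x => if Btw3 x a b then - dist a x else dist a x, Isometry.of_dist_eq ?_⟩
  intro x y
  rw [Real.dist_eq]
  by_cases hx : Btw3 x a b <;> by_cases hy : Btw3 y a b <;> simp only [hx, hy, if_true, if_false]
  · rw [same x y (neg x y hx hy), ← abs_neg]
    congr 1; ring
  · rw [opp x y (mixed x y hx hy), ← abs_neg, abs_of_nonneg]
    · ring
    · have := dist_nonneg (x := a) (y := x)
      have := dist_nonneg (x := a) (y := y)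
      linarith
  · rw [dist_comm x y, opp y x (mixed y x hy hx), abs_of_nonneg]
    · ring
    · have := dist_nonneg (x := a) (y := x)
      have := dist_nonneg (x := a) (y := y)
      linarith
  · exact (same x y (Or.inl (not_btw_trans huniq hgeo hx (fun h => hy h.symm)))).symm
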